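/- For q ≥ 2, V_d is the orthogonal direct sum V_0 ⊕ V_1 ⊕ V_2, with dim V_1 = d(d+1)/2 − 1 and dim V_2 = d(d−1)/2 − 1, and each of V_0, V_1, V_2 is invariant under φ⊗² and carries an irreducible subrepresentation of φ⊗². For q = 1, V_2 = 0 and V_0, V_1 are invariant and carry irreducible subrepresentations. -/

import Mathlib

open Matrix MeasureTheory
open scoped Kronecker

noncomputable section

namespace CliffordPaper

/-- The single-qubit Pauli matrices `1, X, Y, Z`. -/
def pauli1 : Fin 4 → Matrix (Fin 2) (Fin 2) ℂ :=
  ![1, !![0, 1; 1, 0], !![0, -Complex.I; Complex.I, 0], !![1, 0; 0, -1]]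

/-- Index type for the computational basis of `q` qubits. -/
abbrev Idx (q : ℕ) := Fin q → Fin 2

/-- The space `M_d` of `d × d` complex matrices, `d = 2^q`. -/
abbrev Mat (q : ℕ) := Matrix (Idx q) (Idx q) ℂ

/-- The space `M_d ⊗ M_d`, realized as matrices indexed by the product index set
(the tensor factors combine via the Kronecker product `⊗ₖ`). -/
abbrev BMat (q : ℕ) := Matrix (Idx q × Idx q) (Idx q × Idx q) ℂ

/-- The `q`-fold Kronecker product of single-qubit Paulis with labels `a`. -/
def PauliOp {q : ℕ} (a : Fin q → Fin 4) : Mat q :=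
  Matrix.of fun x y => ∏ i, pauli1 (a i) (x i) (y i)

/-- `√d` as a complex number, where `d = 2^q`. -/
def sqrtd (q : ℕ) : ℂ := (Real.sqrt (2 ^ q) : ℝ)

/-- The set `σ̂_q` of normalized Pauli operators. -/
def sigmaHat (q : ℕ) : Set (Mat q) :=
  {M | ∃ a : Fin q → Fin 4, M = (sqrtd q)⁻¹ • PauliOp a}

/-- The normalized identity `σ₀ = 1/√d`. -/
def sigma0 (q : ℕ) : Mat q := (sqrtd q)⁻¹ • (1 : Mat q)

/-- `σ_q = σ̂_q \ {σ₀}`. -/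
def sigmaSet (q : ℕ) : Set (Mat q) := sigmaHat q \ {sigma0 q}

/-- `N_τ`: the normalized nonidentity Paulis anticommuting with `τ`. -/
def NSet {q : ℕ} (τ : Mat q) : Set (Mat q) :=
  {σ | σ ∈ sigmaSet q ∧ σ * τ + τ * σ = 0}

/-- `C_τ`: the normalized nonidentity Paulis distinct from `τ` commuting with `τ`. -/
def CSet {q : ℕ} (τ : Mat q) : Set (Mat q) :=
  {σ | σ ∈ sigmaSet q ∧ σ ≠ τ ∧ σ * τ = τ * σ}

/-- `Ĉ_τ`: the normalized Paulis commuting with `τ`. -/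
def CHatSet {q : ℕ} (τ : Mat q) : Set (Mat q) :=
  {σ | σ ∈ sigmaHat q ∧ σ * τ = τ * σ}

/-- The normalized product `σ·τ = √d στ`. -/
def nprod {q : ℕ} (σ τ : Mat q) : Mat q := sqrtd q • (σ * τ)

/-- The Clifford normalizer `𝒩_q`: unitaries mapping normalized Paulis to
signed normalized Paulis under conjugation. -/
def Cliff (q : ℕ) : Set (Mat q) :=
  {U | U ∈ Matrix.unitaryGroup (Idx q) ℂ ∧
    ∀ σ ∈ sigmaHat q, ∃ τ ∈ sigmaHat q, U * σ * Uᴴ = τ ∨ U * σ * Uᴴ = -τ}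

/-- The two-copy representation `φ⊗²(U) : A ⊗ B ↦ (UAU†) ⊗ (UBU†)`, extended linearly. -/
def twoCopy {q : ℕ} (U : Mat q) : BMat q →ₗ[ℂ] BMat q where
  toFun M := (U ⊗ₖ U) * M * (U ⊗ₖ U)ᴴ
  map_add' M N := by
    show (U ⊗ₖ U) * (M + N) * (U ⊗ₖ U)ᴴ = (U ⊗ₖ U) * M * (U ⊗ₖ U)ᴴ + (U ⊗ₖ U) * N * (U ⊗ₖ U)ᴴ
    rw [Matrix.mul_add, Matrix.add_mul]
  map_smul' c M := by
    show (U ⊗ₖ U) * (c • M) * (U ⊗ₖ U)ᴴ = c • ((U ⊗ₖ U) * M * (U ⊗ₖ U)ᴴ)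
    rw [Matrix.mul_smul, Matrix.smul_mul]

/-- The Hilbert–Schmidt inner product `⟨A, B⟩ = tr(A† B)`. -/
def hs {q : ℕ} (A B : BMat q) : ℂ := (Aᴴ * B).trace

/-- A subspace is invariant under the two-copy representation of `𝒩_q`. -/
def IsInvariant (q : ℕ) (W : Submodule ℂ (BMat q)) : Prop :=
  ∀ U ∈ Cliff q, ∀ v ∈ W, twoCopy U v ∈ W

/-- A nonzero invariant subspace carries an irreducible subrepresentation. -/
def CarriesIrred (q : ℕ) (W : Submodule ℂ (BMat q)) : Prop :=
  W ≠ ⊥ ∧ IsInvariant q W ∧ ∀ W' ≤ W, IsInvariant q W' → W' = ⊥ ∨ W' = W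

/-- Two invariant subspaces carry equivalent subrepresentations: there is a linear
isomorphism between them intertwining the two-copy representation. -/
def EquivRep (q : ℕ) (W W' : Submodule ℂ (BMat q)) : Prop :=
  ∃ T : BMat q →ₗ[ℂ] BMat q, Submodule.map T W = W' ∧
    (∀ x ∈ W, T x = 0 → x = 0) ∧
    ∀ U ∈ Cliff q, ∀ x ∈ W, T (twoCopy U x) = twoCopy U (T x)

/-- `S_{σ,τ} = (σ⊗τ + τ⊗σ)/√2`. -/
def SVec {q : ℕ} (σ τ : Mat q) : BMat q :=
  ((Real.sqrt 2 : ℂ))⁻¹ • (σ ⊗ₖ τ + τ ⊗ₖ σ)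

/-- `A_{σ,τ} = (σ⊗τ − τ⊗σ)/√2`. -/
def AVec {q : ℕ} (σ τ : Mat q) : BMat q :=
  ((Real.sqrt 2 : ℂ))⁻¹ • (σ ⊗ₖ τ - τ ⊗ₖ σ)

/-- The trivial sector `V_id`. -/
def Vid (q : ℕ) : Submodule ℂ (BMat q) :=
  Submodule.span ℂ {sigma0 q ⊗ₖ sigma0 q}

/-- The right adjoint sector `V_r`. -/
def Vr (q : ℕ) : Submodule ℂ (BMat q) :=
  Submodule.span ℂ {M | ∃ τ ∈ sigmaSet q, M = sigma0 q ⊗ₖ τ}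

/-- The left adjoint sector `V_l`. -/
def Vl (q : ℕ) : Submodule ℂ (BMat q) :=
  Submodule.span ℂ {M | ∃ τ ∈ sigmaSet q, M = τ ⊗ₖ sigma0 q}

/-- The diagonal sector `V_d`. -/
def Vdiag (q : ℕ) : Submodule ℂ (BMat q) :=
  Submodule.span ℂ {M | ∃ τ ∈ sigmaSet q, M = τ ⊗ₖ τ}

/-- The symmetric commuting sector `V_[S]`. -/
def VScom (q : ℕ) : Submodule ℂ (BMat q) :=
  Submodule.span ℂ {M | ∃ τ ∈ sigmaSet q, ∃ σ ∈ CSet τ, M = SVec σ τ}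

/-- The symmetric anti-commuting sector `V_{S}`. -/
def VSanti (q : ℕ) : Submodule ℂ (BMat q) :=
  Submodule.span ℂ {M | ∃ τ ∈ sigmaSet q, ∃ σ ∈ NSet τ, M = SVec σ τ}

/-- The antisymmetric commuting sector `V_[A]`. -/
def VAcom (q : ℕ) : Submodule ℂ (BMat q) :=
  Submodule.span ℂ {M | ∃ τ ∈ sigmaSet q, ∃ σ ∈ CSet τ, M = AVec σ τ}

/-- The antisymmetric anti-commuting sector `V_{A}`. -/
def VAanti (q : ℕ) : Submodule ℂ (BMat q) :=
  Submodule.span ℂ {M | ∃ τ ∈ sigmaSet q, ∃ σ ∈ NSet τ, M = AVec σ τ}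

/-- `V_[A]` presented with the spanning vectors `A_{σ,σ·τ}`, `σ ∈ C_τ`. -/
def VAcom' (q : ℕ) : Submodule ℂ (BMat q) :=
  Submodule.span ℂ {M | ∃ τ ∈ sigmaSet q, ∃ σ ∈ CSet τ, M = AVec σ (nprod σ τ)}

/-- `V_0 = span{Σ_{σ∈σ_q} σ⊗σ}`. -/
def V0diag (q : ℕ) : Submodule ℂ (BMat q) :=
  Submodule.span ℂ {∑ᶠ σ ∈ sigmaSet q, σ ⊗ₖ σ}

/-- `V_1`, the "positive" part of the diagonal sector. -/
def V1diag (q : ℕ) : Submodule ℂ (BMat q) :=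
  Submodule.span ℂ {v | ∃ lam : Mat q → ℂ,
    v = ∑ᶠ σ ∈ sigmaSet q, lam σ • (σ ⊗ₖ σ) ∧
    (∑ᶠ σ ∈ sigmaSet q, lam σ) = 0 ∧
    ∀ τ ∈ sigmaSet q, (∑ᶠ σ ∈ NSet τ, lam σ) = -((2 ^ q : ℂ) / 2) * lam τ}

/-- `V_2`, the "negative" part of the diagonal sector. -/
def V2diag (q : ℕ) : Submodule ℂ (BMat q) :=
  Submodule.span ℂ {v | ∃ lam : Mat q → ℂ,
    v = ∑ᶠ σ ∈ sigmaSet q, lam σ • (σ ⊗ₖ σ) ∧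
    (∑ᶠ σ ∈ sigmaSet q, lam σ) = 0 ∧
    ∀ τ ∈ sigmaSet q, (∑ᶠ σ ∈ NSet τ, lam σ) = ((2 ^ q : ℂ) / 2) * lam τ}

/-- `v^[adj]_τ = (2|C_τ|)^{-1/2} Σ_{σ∈C_τ} S_{σ,σ·τ}`. -/
def vadjS {q : ℕ} (τ : Mat q) : BMat q :=
  ((Real.sqrt (2 * ((CSet τ).ncard : ℝ)) : ℂ))⁻¹ • ∑ᶠ σ ∈ CSet τ, SVec σ (nprod σ τ)

/-- `v^{adj}_τ = (2|N_τ|)^{-1/2} Σ_{σ∈N_τ} A_{σ,iσ·τ}`. -/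
def vadjA {q : ℕ} (τ : Mat q) : BMat q :=
  ((Real.sqrt (2 * ((NSet τ).ncard : ℝ)) : ℂ))⁻¹ •
    ∑ᶠ σ ∈ NSet τ, AVec σ (Complex.I • nprod σ τ)

/-- The symmetric adjoint sector `V_[adj]`. -/
def VadjS (q : ℕ) : Submodule ℂ (BMat q) :=
  Submodule.span ℂ {M | ∃ τ ∈ sigmaSet q, M = vadjS τ}

/-- The antisymmetric adjoint sector `V_{adj}`. -/
def VadjA (q : ℕ) : Submodule ℂ (BMat q) :=
  Submodule.span ℂ {M | ∃ τ ∈ sigmaSet q, M = vadjA τ}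

/-- The orthogonal complement `V^⊥_{adj}` of `V_{adj}` inside `V_{A}`. -/
def VadjAperp (q : ℕ) : Submodule ℂ (BMat q) :=
  Submodule.span ℂ {v | v ∈ VAanti q ∧ ∀ w ∈ VadjA q, hs w v = 0}

/-- `V_{1}^τ`. -/
def V1symτ (q : ℕ) (τ : Mat q) : Submodule ℂ (BMat q) :=
  Submodule.span ℂ {v | ∃ lam : Mat q → ℂ,
    v = ∑ᶠ σ ∈ NSet τ, lam σ • SVec σ (Complex.I • nprod σ τ) ∧
    ∀ ν ∈ NSet τ, (∑ᶠ σ ∈ NSet τ ∩ CSet ν, lam σ) - (∑ᶠ σ ∈ NSet τ ∩ NSet ν, lam σ)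
      = ((2 ^ q : ℂ) / 2) * lam ν}

/-- `V_{2}^τ`. -/
def V2symτ (q : ℕ) (τ : Mat q) : Submodule ℂ (BMat q) :=
  Submodule.span ℂ {v | ∃ lam : Mat q → ℂ,
    v = ∑ᶠ σ ∈ NSet τ, lam σ • SVec σ (Complex.I • nprod σ τ) ∧
    ∀ ν ∈ NSet τ, (∑ᶠ σ ∈ NSet τ ∩ CSet ν, lam σ) - (∑ᶠ σ ∈ NSet τ ∩ NSet ν, lam σ)
      = -((2 ^ q : ℂ) / 2) * lam ν}

/-- `V_{1} = ⊕_τ V_{1}^τ`. -/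
def V1sym (q : ℕ) : Submodule ℂ (BMat q) := ⨆ τ ∈ sigmaSet q, V1symτ q τ

/-- `V_{2} = ⊕_τ V_{2}^τ`. -/
def V2sym (q : ℕ) : Submodule ℂ (BMat q) := ⨆ τ ∈ sigmaSet q, V2symτ q τ

/-- The defining property of the map `Θ` on `V_[A]`. -/
def ThetaProp (q : ℕ) (Θ : BMat q →ₗ[ℂ] BMat q) : Prop :=
  ∀ τ ∈ sigmaSet q, ∀ σ ∈ CSet τ,
    Θ (AVec σ (nprod σ τ)) =
      (∑ᶠ σ' ∈ NSet τ ∩ CSet σ, AVec σ' (Complex.I • nprod σ' τ)) -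
      ∑ᶠ σ' ∈ NSet τ ∩ NSet σ, AVec σ' (Complex.I • nprod σ' τ)

/-- `V` = span of off-diagonal products `σ⊗σ̂`, `σ ≠ σ̂`. -/
def Voff (q : ℕ) : Submodule ℂ (BMat q) :=
  Submodule.span ℂ {M | ∃ σ ∈ sigmaSet q, ∃ σ' ∈ sigmaSet q, σ ≠ σ' ∧ M = σ ⊗ₖ σ'}

/-- `V^τ` = span of the `σ⊗σ̂` with `σ·σ̂ ∈ {τ, −τ, iτ, −iτ}`. -/
def Vtau (q : ℕ) (τ : Mat q) : Submodule ℂ (BMat q) :=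
  Submodule.span ℂ {M | ∃ σ ∈ sigmaSet q, ∃ σ' ∈ sigmaSet q,
    (nprod σ σ' = τ ∨ nprod σ σ' = -τ ∨ nprod σ σ' = Complex.I • τ ∨
      nprod σ σ' = -(Complex.I • τ)) ∧ M = σ ⊗ₖ σ'}


/-- labels -/
abbrev Lab (q : ℕ) := Fin q → Fin 4

def m1 : Fin 4 → Fin 4 → Fin 4 :=
  ![![0,1,2,3],![1,0,3,2],![2,3,0,1],![3,2,1,0]]

def ph1 : Fin 4 → Fin 4 → ℂ :=
  ![![1,1,1,1],![1,1,Complex.I,-Complex.I],![1,-Complex.I,1,Complex.I],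
    ![1,Complex.I,-Complex.I,1]]

def s1 : Fin 4 → Fin 4 → ℂ :=
  ![![1,1,1,1],![1,1,-1,-1],![1,-1,1,-1],![1,-1,-1,1]]

def mm {q : ℕ} (a b : Lab q) : Lab q := fun i => m1 (a i) (b i)
def ss {q : ℕ} (a b : Lab q) : ℂ := ∏ i, s1 (a i) (b i)
def ph {q : ℕ} (a b : Lab q) : ℂ := ∏ i, ph1 (a i) (b i)

lemma pauli1_mul (a b : Fin 4) : pauli1 a * pauli1 b = ph1 a b • pauli1 (m1 a b) := by
  fin_cases a <;> fin_cases b <;> ext i j <;> fin_cases i <;> fin_cases j <;>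
    simp [pauli1, ph1, m1, Matrix.mul_apply, Fin.sum_univ_two]

lemma pauli1_herm (a : Fin 4) : (pauli1 a)ᴴ = pauli1 a := by
  fin_cases a <;> ext i j <;> fin_cases i <;> fin_cases j <;>
    simp [pauli1]

lemma pauli1_trace (a : Fin 4) : (pauli1 a).trace = if a = 0 then 2 else 0 := by
  fin_cases a <;> simp [pauli1, Matrix.trace, Fin.sum_univ_two]

lemma s1_symm (a b : Fin 4) : s1 a b = s1 b a := by
  fin_cases a <;> fin_cases b <;> simp [s1]
lemma s1_self (a : Fin 4) : s1 a a = 1 := by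
  fin_cases a <;> simp [s1]
lemma s1_zero (a : Fin 4) : s1 0 a = 1 := by
  fin_cases a <;> simp [s1]
lemma s1_pm (a b : Fin 4) : s1 a b = 1 ∨ s1 a b = -1 := by
  fin_cases a <;> fin_cases b <;> simp [s1]
lemma s1_m (a b c : Fin 4) : s1 (m1 a b) c = s1 a c * s1 b c := by
  fin_cases a <;> fin_cases b <;> fin_cases c <;> simp [s1, m1]
lemma s1_sum (a : Fin 4) : ∑ c, s1 a c = if a = 0 then 4 else 0 := by
  fin_cases a <;> simp [s1, Fin.sum_univ_four] <;> norm_num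
lemma ph1_sq (a b : Fin 4) : ph1 a b ^ 2 = s1 a b := by
  fin_cases a <;> fin_cases b <;> simp [s1, ph1]
lemma ph1_symm (a b : Fin 4) : ph1 a b = s1 a b * ph1 b a := by
  fin_cases a <;> fin_cases b <;> simp [s1, ph1]
lemma m1_comm (a b : Fin 4) : m1 a b = m1 b a := by revert a b; decide
lemma m1_cancel (a b : Fin 4) : m1 (m1 a b) b = a := by revert a b; decide
lemma m1_self (a : Fin 4) : m1 a a = 0 := by revert a; decide
lemma m1_zero (a : Fin 4) : m1 0 a = a := by revert a; decide

section
variable {q : ℕ}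

lemma mm_comm (a b : Lab q) : mm a b = mm b a := funext fun _ => m1_comm _ _
lemma mm_cancel (a b : Lab q) : mm (mm a b) b = a := funext fun _ => m1_cancel _ _
lemma mm_self (a : Lab q) : mm a a = 0 := funext fun _ => m1_self _
lemma mm_zero (a : Lab q) : mm 0 a = a := funext fun _ => m1_zero _
lemma mm_eq_zero (a b : Lab q) : mm a b = 0 ↔ a = b := by
  constructor
  · intro h; have := mm_cancel a b; rw [h, mm_zero] at this; exact this.symm
  · rintro rfl; exact mm_self _
lemma ss_symm (a b : Lab q) : ss a b = ss b a := Finset.prod_congr rfl fun _ _ => s1_symm _ _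
lemma ss_self (a : Lab q) : ss a a = 1 := Finset.prod_eq_one fun _ _ => s1_self _
lemma ss_zero (a : Lab q) : ss 0 a = 1 := Finset.prod_eq_one fun _ _ => s1_zero _
lemma ss_zero' (a : Lab q) : ss a 0 = 1 := by rw [ss_symm, ss_zero]
lemma ss_mm (a b c : Lab q) : ss (mm a b) c = ss a c * ss b c := by
  simp only [ss, ← Finset.prod_mul_distrib]
  exact Finset.prod_congr rfl fun _ _ => s1_m _ _ _
lemma ss_mm' (a b c : Lab q) : ss c (mm a b) = ss c a * ss c b := by
  rw [ss_symm, ss_mm, ss_symm a, ss_symm b]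
lemma ss_pm (a b : Lab q) : ss a b = 1 ∨ ss a b = -1 := by
  unfold ss
  apply Finset.prod_induction _ (fun x : ℂ => x = 1 ∨ x = -1)
  · rintro a b (rfl | rfl) (rfl | rfl) <;> simp
  · simp
  · intro i _; exact s1_pm _ _
lemma ss_sum (b : Lab q) : ∑ c, ss b c = if b = 0 then ((2:ℂ) ^ q) ^ 2 else 0 := by
  have : ∑ c, ss b c = ∏ i, ∑ x, s1 (b i) x := by
    rw [Finset.prod_univ_sum]; simp [ss]
  rw [this]
  simp only [s1_sum]
  split_ifs with h
  · subst h; simp [← pow_mul]; rw [mul_comm, pow_mul]; norm_num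
  · obtain ⟨i, hi⟩ := Function.ne_iff.mp h
    exact Finset.prod_eq_zero (Finset.mem_univ i) (by simpa using hi)
lemma ss_sum' (b : Lab q) : ∑ c, ss c b = if b = 0 then ((2:ℂ) ^ q) ^ 2 else 0 := by
  rw [← ss_sum]; exact Finset.sum_congr rfl fun c _ => ss_symm _ _
lemma ph_sq (a b : Lab q) : ph a b ^ 2 = ss a b := by
  simp only [ph, ss, ← Finset.prod_pow, ph1_sq]
lemma ph_symm (a b : Lab q) : ph a b = ss a b * ph b a := by
  simp only [ph, ss, ← Finset.prod_mul_distrib]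
  exact Finset.prod_congr rfl fun i _ => ph1_symm _ _
lemma ph_self (a : Lab q) : ph a a = 1 := by
  have h1 : ∀ x : Fin 4, ph1 x x = 1 := by
    intro x; fin_cases x <;> simp [ph1]
  exact Finset.prod_eq_one fun _ _ => h1 _
lemma ph_ne (a b : Lab q) : ph a b ≠ 0 := by
  intro h
  have := ph_sq a b
  rw [h] at this
  rcases ss_pm a b with h | h <;> rw [h] at this <;> norm_num at this

lemma PauliOp_mul (a b : Lab q) : PauliOp a * PauliOp b = ph a b • PauliOp (mm a b) := by
  ext x y
  simp only [Matrix.mul_apply, PauliOp, Matrix.of_apply, Matrix.smul_apply, smul_eq_mul, ph,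
    ← Finset.prod_mul_distrib]
  have : ∀ i, ph1 (a i) (b i) * pauli1 (mm a b i) (x i) (y i)
      = ∑ j, pauli1 (a i) (x i) j * pauli1 (b i) j (y i) := by
    intro i
    have := congrFun (congrFun (pauli1_mul (a i) (b i)) (x i)) (y i)
    rw [Matrix.mul_apply] at this
    rw [this]; rfl
  simp only [this]
  rw [Finset.prod_univ_sum]
  simp

lemma PauliOp_herm (a : Lab q) : (PauliOp a)ᴴ = PauliOp a := by
  ext x y
  simp only [Matrix.conjTranspose_apply, PauliOp, Matrix.of_apply, star_prod]
  refine Finset.prod_congr rfl fun i _ => ?_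
  exact congrFun (congrFun (pauli1_herm (a i)) (x i)) (y i)

lemma PauliOp_zero : PauliOp (0 : Lab q) = 1 := by
  ext x y
  simp only [PauliOp, Matrix.of_apply]
  have h0 : ∀ i : Fin q, pauli1 ((0 : Lab q) i) (x i) (y i) = if x i = y i then 1 else 0 := by
    intro i; simp [pauli1, Matrix.one_apply]
  simp only [h0, Matrix.one_apply]
  rw [Finset.prod_ite_zero]
  simp [funext_iff]

lemma PauliOp_trace (a : Lab q) : (PauliOp a).trace = if a = 0 then (2:ℂ) ^ q else 0 := by
  have : (PauliOp a).trace = ∏ i, (pauli1 (a i)).trace := by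
    simp only [Matrix.trace, Matrix.diag]
    rw [Finset.prod_univ_sum]
    simp [PauliOp]
  rw [this]
  simp only [pauli1_trace]
  split_ifs with h
  · subst h; simp
  · obtain ⟨i, hi⟩ := Function.ne_iff.mp h
    exact Finset.prod_eq_zero (Finset.mem_univ i) (by simpa using hi)

/-- normalized Pauli -/
def sg (a : Lab q) : Mat q := (sqrtd q)⁻¹ • PauliOp a

lemma sqrtd_sq : sqrtd q * sqrtd q = 2 ^ q := by
  unfold sqrtd
  rw [← Complex.ofReal_mul, Real.mul_self_sqrt (by positivity)]
  simp
lemma sqrtd_ne : sqrtd q ≠ 0 := by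
  intro h; have := sqrtd_sq (q := q); rw [h, zero_mul] at this
  exact pow_ne_zero q two_ne_zero this.symm
lemma star_sqrtd : star (sqrtd q) = sqrtd q := by
  simp [sqrtd]

lemma sg_herm (a : Lab q) : (sg a)ᴴ = sg a := by
  simp only [sg, Matrix.conjTranspose_smul, PauliOp_herm, star_inv₀, star_sqrtd]

lemma sg_trace (a b : Lab q) : (sg a * sg b).trace = if a = b then 1 else 0 := by
  simp only [sg, Matrix.smul_mul, Matrix.mul_smul, PauliOp_mul, Matrix.trace_smul, PauliOp_trace,
    smul_eq_mul, mm_eq_zero]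
  split_ifs with h
  · subst h
    rw [ph_self, ← sqrtd_sq]; field_simp [sqrtd_ne (q := q)]
  · simp

lemma sg_zero : sg (0 : Lab q) = sigma0 q := by simp [sg, sigma0, PauliOp_zero]

lemma sg_comm (a b : Lab q) : sg a * sg b = ss a b • (sg b * sg a) := by
  simp only [sg, Matrix.smul_mul, Matrix.mul_smul, PauliOp_mul, smul_smul]
  rw [ph_symm a b, mm_comm b a]; congr 1; ring

lemma PauliOp_ne (a : Lab q) : PauliOp a ≠ 0 := by
  intro h
  have := PauliOp_mul a a
  rw [h, ph_self, mm_self, PauliOp_zero] at this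
  simp at this

lemma sg_mul_ne (a b : Lab q) : sg a * sg b ≠ 0 := by
  simp only [sg, Matrix.smul_mul, Matrix.mul_smul, PauliOp_mul, smul_smul]
  refine smul_ne_zero ?_ (PauliOp_ne _)
  simp [ph_ne, sqrtd_ne]

lemma sg_inj : Function.Injective (sg (q := q)) := by
  intro a b h
  by_contra hab
  have h1 := sg_trace a b
  rw [← h, sg_trace] at h1
  simp [hab] at h1

/-- the coefficient map -/
def Phi : (Lab q → ℂ) →ₗ[ℂ] BMat q where
  toFun l := ∑ a, l a • (sg a ⊗ₖ sg a)
  map_add' l k := by simp [add_smul, Finset.sum_add_distrib]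
  map_smul' c l := by simp [Finset.smul_sum, smul_smul]

lemma Phi_apply (l : Lab q → ℂ) : Phi l = ∑ a, l a • (sg a ⊗ₖ sg a) := rfl

lemma hs_sg (a b : Lab q) : hs (sg a ⊗ₖ sg a) (sg b ⊗ₖ sg b) = if a = b then 1 else 0 := by
  unfold hs
  rw [Matrix.conjTranspose_kronecker, ← Matrix.mul_kronecker_mul, Matrix.trace_kronecker,
    sg_herm, sg_trace]
  split_ifs <;> simp

lemma hs_Phi (l k : Lab q → ℂ) : hs (Phi l) (Phi k) = ∑ a, star (l a) * k a := by
  have : hs (Phi l) (Phi k) =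
      ∑ a, ∑ b, star (l a) * k b * hs (sg a ⊗ₖ sg a) (sg b ⊗ₖ sg b) := by
    simp only [hs, Phi_apply, Matrix.conjTranspose_sum, Matrix.conjTranspose_smul,
      Finset.sum_mul, Finset.mul_sum, Matrix.trace_sum, Matrix.smul_mul, Matrix.mul_smul,
      Matrix.trace_smul, smul_eq_mul, mul_assoc]
    rw [Finset.sum_comm]
    refine Finset.sum_congr rfl fun a _ => Finset.sum_congr rfl fun b _ => ?_
    ring
  rw [this]
  simp [hs_sg]

lemma Phi_inj : Function.Injective (Phi (q := q)) := by
  rw [← LinearMap.ker_eq_bot, LinearMap.ker_eq_bot']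
  intro l hl
  ext b
  have := hs_Phi (Pi.single b 1) l
  rw [hl] at this
  simp [hs, Pi.single_apply, apply_ite, ite_mul] at this
  simpa using this.symm

lemma Phi_single (a : Lab q) : Phi (Pi.single a 1) = sg a ⊗ₖ sg a := by
  simp [Phi_apply, Pi.single_apply, ite_smul]

lemma kron_inj (a b : Lab q) (h : sg a ⊗ₖ sg a = sg b ⊗ₖ sg b) : a = b := by
  rw [← Phi_single, ← Phi_single] at h
  have := congrFun (Phi_inj h) a
  by_contra hab
  simp [hab] at this

lemma sigmaSet_eq : sigmaSet q = sg '' {a : Lab q | a ≠ 0} := by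
  ext M
  simp only [sigmaSet, sigmaHat, Set.mem_sdiff, Set.mem_ofPred_eq, Set.mem_singleton_iff,
    Set.mem_image]
  constructor
  · rintro ⟨⟨a, rfl⟩, h⟩
    refine ⟨a, ?_, rfl⟩
    rintro rfl; exact h sg_zero
  · rintro ⟨a, ha, rfl⟩
    exact ⟨⟨a, rfl⟩, fun h => ha (sg_inj (h.trans sg_zero.symm))⟩

lemma NSet_eq (t : Lab q) : NSet (sg t) = sg '' {a : Lab q | a ≠ 0 ∧ ss a t = -1} := by
  ext M
  simp only [NSet, sigmaSet_eq, Set.mem_ofPred_eq, Set.mem_image]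
  have key : ∀ a : Lab q, sg a * sg t + sg t * sg a = 0 ↔ ss a t = -1 := by
    intro a
    rw [sg_comm a t]
    nth_rewrite 2 [← one_smul ℂ (sg t * sg a)]
    rw [← add_smul, smul_eq_zero, or_iff_left (sg_mul_ne _ _)]
    exact add_eq_zero_iff_eq_neg
  constructor
  · rintro ⟨⟨a, ha, rfl⟩, h⟩
    exact ⟨a, ⟨ha, (key a).1 h⟩, rfl⟩
  · rintro ⟨a, ⟨ha, h⟩, rfl⟩
    exact ⟨⟨a, ha, rfl⟩, (key a).2 h⟩

lemma finsum_image {M : Type*} [AddCommMonoid M] (S : Set (Lab q)) [DecidablePred (· ∈ S)]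
    (f : Mat q → M) :
    ∑ᶠ σ ∈ sg '' S, f σ = ∑ a, if a ∈ S then f (sg a) else 0 := by
  rw [finsum_mem_image sg_inj.injOn, finsum_eq_sum_of_fintype]
  refine Finset.sum_congr rfl fun a _ => ?_
  rw [finsum_eq_if]

end

section
variable {q : ℕ}

/-- eigenspace of the character matrix -/
def EE (q : ℕ) (ε : ℂ) : Submodule ℂ (Lab q → ℂ) where
  carrier := {l | l 0 = 0 ∧ ∀ b, ∑ c, ss b c * l c = ε * 2 ^ q * l b}
  add_mem' := by
    rintro l k ⟨h1, h2⟩ ⟨h3, h4⟩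
    refine ⟨by simp [h1, h3], fun b => ?_⟩
    simp only [Pi.add_apply, mul_add, Finset.sum_add_distrib, h2, h4]
  zero_mem' := by simp
  smul_mem' := by
    rintro x l ⟨h1, h2⟩
    refine ⟨by simp [h1], fun b => ?_⟩
    simp only [Pi.smul_apply, smul_eq_mul, mul_left_comm _ x, ← Finset.mul_sum, h2]

lemma mem_EE (ε : ℂ) (l : Lab q → ℂ) :
    l ∈ EE q ε ↔ l 0 = 0 ∧ ∀ b, ∑ c, ss b c * l c = ε * 2 ^ q * l b := Iff.rfl

lemma EE_sum {ε : ℂ} {l : Lab q → ℂ} (h : l ∈ EE q ε) : ∑ c, l c = 0 := by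
  have := h.2 0
  simpa [ss_zero, h.1] using this

/-- transvection -/
def TT (a b : Lab q) : Lab q := by
  classical exact if ss a b = 1 then b else mm a b

lemma TT_pos {a b : Lab q} (h : ss a b = 1) : TT a b = b := by simp [TT, h]
lemma TT_neg {a b : Lab q} (h : ss a b = -1) : TT a b = mm a b := by
  simp only [TT, h]; rw [if_neg (by norm_num)]

lemma TT_apply (l : Lab q → ℂ) (a b : Lab q) :
    l (TT a b) = (1 + ss a b) / 2 * l b + (1 - ss a b) / 2 * l (mm a b) := by
  rcases ss_pm a b with h | h
  · rw [TT_pos h, h]; ring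
  · rw [TT_neg h, h]; ring

lemma mm_invol (b : Lab q) : Function.Involutive (fun a : Lab q => mm a b) :=
  fun a => mm_cancel a b

lemma avg {ε : ℂ} {l : Lab q → ℂ} (hl : l ∈ EE q ε) (t : Lab q) (ht : t ≠ 0) (b : Lab q) :
    ∑ a, (1 + ss a t) / 2 * l (TT a b) =
      (2 ^ q) ^ 2 / 4 * (1 + if b = t then 1 else 0) * l b
        + ε * 2 ^ q / 4 * (- l b + ss b t * (l t - l (mm b t))) := by
  have e1 : ∑ a, (1 + ss a t) / 2 * ((1 + ss a b) / 2 * l b)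
      = (2 ^ q) ^ 2 / 4 * (1 + if b = t then 1 else 0) * l b := by
    have : ∀ a, (1 + ss a t) / 2 * ((1 + ss a b) / 2 * l b) =
      (1 + ss a t + ss a b + ss a (mm b t)) * (l b / 4) := by
      intro a; rw [ss_mm']; ring
    simp only [this, ← Finset.sum_mul, Finset.sum_add_distrib, ss_sum', mm_eq_zero, if_neg ht]
    have hc : ∑ _a : Lab q, (1:ℂ) = (2 ^ q) ^ 2 := by
      have := ss_sum (0 : Lab q)
      simpa only [ss_zero, if_true] using this
    rw [hc]
    by_cases hb : b = 0
    · rw [hb, hl.1]; simp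
    · rw [if_neg hb]; split_ifs <;> ring
  have e2 : ∑ a, (1 + ss a t) / 2 * ((1 - ss a b) / 2 * l (mm a b))
      = ε * 2 ^ q / 4 * (- l b + ss b t * (l t - l (mm b t))) := by
    rw [← Equiv.sum_comp (mm_invol b).toPerm]
    simp only [Function.Involutive.coe_toPerm, mm_cancel, ss_mm, ss_self, mul_one]
    have : ∀ c, (1 + ss c t * ss b t) / 2 * ((1 - ss c b) / 2 * l c) =
      (l c - ss b c * l c + ss b t * (ss t c * l c) - ss b t * (ss (mm b t) c * l c)) / 4 := by
      intro c; rw [ss_mm, ss_symm c b, ss_symm c t]; ring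
    simp only [this, ← Finset.sum_div, Finset.sum_add_distrib, Finset.sum_sub_distrib,
      ← Finset.mul_sum, hl.2, EE_sum hl]
    ring
  rw [← e1, ← e2, ← Finset.sum_add_distrib]
  refine Finset.sum_congr rfl fun a _ => ?_
  rw [TT_apply l]; ring

def CC (ε : ℂ) (t : Lab q) (l : Lab q → ℂ) : Lab q → ℂ := fun b =>
  (ε * 2 ^ q * (if b = t then 1 else 0) + ss b t) * l t
    - (1 + ss b t) / 2 * (l b + l (mm b t))

def nu (ε : ℂ) (t : Lab q) : Lab q → ℂ := fun b =>
  if b = 0 then 0 else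
  ((2 ^ q) ^ 2 + ε * 2 ^ q) * (if b = t then 1 else 0) + (ε * 2 ^ q + 1) * ss b t - 1

lemma two_pow_ne : (2:ℂ) ^ q ≠ 0 := pow_ne_zero _ two_ne_zero

lemma CC_mem {ε : ℂ} (hε : ε ^ 2 = 1) {W : Submodule ℂ (Lab q → ℂ)} (hW : W ≤ EE q ε)
    (hT : ∀ l ∈ W, ∀ a, (fun b => l (TT a b)) ∈ W) {l : Lab q → ℂ} (hl : l ∈ W)
    (t : Lab q) (ht : t ≠ 0) : CC ε t l ∈ W := by
  have h1 : ∑ a, ((1 + ss a t) / 2) • (fun b => l (TT a b)) ∈ W :=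
    W.sum_mem fun a _ => W.smul_mem _ (hT l hl a)
  have h2 := W.sub_mem (W.smul_mem (4 * ε / 2 ^ q) (W.sub_mem h1 (W.smul_mem ((2 ^ q) ^ 2 / 4) hl)))
    (W.sub_mem (hT l hl t) hl)
  convert h2 using 1
  ext b
  have h3 := avg (hW hl) t ht b
  simp only [Pi.sub_apply, Pi.smul_apply, Finset.sum_apply, smul_eq_mul]
  rw [h3, TT_apply l]
  unfold CC
  rw [mm_comm t b, ss_symm t b]
  have h4 := two_pow_ne (q := q)
  by_cases hb : b = t
  · subst hb
    simp only [if_true, mm_self, (hW hl).1, ss_self]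
    field_simp
    ring
  · simp only [if_neg hb]
    field_simp
    linear_combination (2 * (l b - ss b t * (l t - l (mm b t)))) * hε

lemma nu_mem {ε : ℂ} (hε : ε ^ 2 = 1) {W : Submodule ℂ (Lab q → ℂ)} (hW : W ≤ EE q ε)
    (hT : ∀ l ∈ W, ∀ a, (fun b => l (TT a b)) ∈ W) {l : Lab q → ℂ} (hl : l ∈ W)
    (t : Lab q) (ht : t ≠ 0) : l t • nu ε t ∈ W := by
  have h1 := CC_mem hε hW hT hl t ht
  have h2 := CC_mem hε hW hT h1 t ht
  have h3 := W.add_mem h2 (W.smul_mem 2 h1)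
  convert h3 using 1
  ext b
  have h0 := (hW h3).1
  have l0 := (hW hl).1
  by_cases hb : b = 0
  · rw [hb, h0]; simp [nu]
  · have hbt : mm b t ≠ t := fun h => hb (by
      rw [← mm_zero t] at h; exact (mm_invol t).injective (by simpa [mm_zero] using h))
    simp only [Pi.add_apply, Pi.smul_apply, smul_eq_mul, nu, CC, if_neg hb, if_true, ss_self,
      mm_self, l0, mm_cancel, ss_mm, mul_one, hbt, if_false]
    by_cases hbt' : b = t
    · subst hbt'
      simp only [if_true, mm_self, l0, ss_self]
      linear_combination (-(2 ^ q) ^ 2 * l b) * hε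
    · simp only [if_neg hbt']
      rcases ss_pm b t with h | h <;> rw [h] <;> ring

lemma nu_ne {ε : ℂ} (hε : ε = 1 ∨ (ε = -1 ∧ 2 ≤ q)) (t b : Lab q) (hb : b ≠ 0) :
    nu ε t b ≠ 0 := by
  have hd0 := two_pow_ne (q := q)
  have hd1 : (2:ℂ) ^ q + 2 ≠ 0 := by
    have : (2 ^ q + 2 : ℕ) ≠ 0 := by positivity
    exact_mod_cast this
  have hd2 : ε = -1 → (2:ℂ) ^ q - 2 ≠ 0 := by
    intro h
    have h2 : 2 ≤ q := by
      rcases hε with h' | h'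
      · rw [h'] at h; norm_num at h
      · exact h'.2
    have : (2 ^ q : ℕ) ≠ 2 := by
      have := Nat.pow_le_pow_right (show 0 < 2 by norm_num) h2
      omega
    rw [sub_ne_zero]
    exact_mod_cast this
  simp only [nu, if_neg hb]
  have hε' : ε = 1 ∨ ε = -1 := by tauto
  by_cases h : b = t
  · subst h
    rw [ss_self, if_pos rfl]
    rcases hε' with h | h
    · intro h'; apply mul_ne_zero hd0 hd1; rw [h] at h'; linear_combination h'
    · intro h'; apply mul_ne_zero hd0 (hd2 h); rw [h] at h'; linear_combination h'
  · rw [if_neg h]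
    rcases ss_pm b t with hs | hs <;> rw [hs]
    · rcases hε' with h | h
      · intro h'; apply hd0; rw [h] at h'; linear_combination h'
      · intro h'; apply hd0; rw [h] at h'; linear_combination -h'
    · rcases hε' with h | h
      · intro h'; apply hd1; rw [h] at h'; linear_combination -h'
      · intro h'; apply hd2 h; rw [h] at h'; linear_combination h'

lemma nu_sum {ε : ℂ} (hε : ε ^ 2 = 1) {l : Lab q → ℂ} (hl : l ∈ EE q ε) (b : Lab q) :
    ∑ t, l t * nu ε t b = 2 * ((2 ^ q) ^ 2 + ε * 2 ^ q) * l b := by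
  by_cases hb : b = 0
  · simp [nu, hb, hl.1]
  have : ∀ t, l t * nu ε t b = ((2 ^ q) ^ 2 + ε * 2 ^ q) * (if b = t then l t else 0)
      + (ε * 2 ^ q + 1) * (ss b t * l t) - l t := by
    intro t; simp only [nu, if_neg hb]; split_ifs <;> ring
  simp only [this, Finset.sum_add_distrib, Finset.sum_sub_distrib, ← Finset.mul_sum, hl.2,
    EE_sum hl, Finset.sum_ite_eq, Finset.mem_univ, if_true]
  linear_combination ((2 ^ q) ^ 2 * l b) * hε

lemma den_ne {ε : ℂ} (hε : ε ^ 2 = 1) (hq : 1 ≤ q) : ((2:ℂ) ^ q) ^ 2 + ε * 2 ^ q ≠ 0 := by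
  have hd0 := two_pow_ne (q := q)
  intro h
  have h1 : (2:ℂ) ^ q + ε = 0 := by
    apply mul_left_cancel₀ hd0; linear_combination h
  have h2 : ((2:ℂ) ^ q) ^ 2 = 1 := by
    rw [← hε]; linear_combination (2 ^ q - ε) * h1
  have h3 : ((2 ^ q) ^ 2 : ℕ) ≠ 1 := by
    have : 2 ≤ 2 ^ q := by
      simpa using Nat.pow_le_pow_right (show 0 < 2 by norm_num) hq
    nlinarith
  exact h3 (by exact_mod_cast h2)

lemma irr_core {ε : ℂ} (hε : ε = 1 ∨ (ε = -1 ∧ 2 ≤ q)) (hq : 1 ≤ q)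
    {W : Submodule ℂ (Lab q → ℂ)} (hW : W ≤ EE q ε)
    (hT : ∀ l ∈ W, ∀ a, (fun b => l (TT a b)) ∈ W) (hne : W ≠ ⊥) : W = EE q ε := by
  have hε2 : ε ^ 2 = 1 := by rcases hε with rfl | ⟨rfl, _⟩ <;> norm_num
  obtain ⟨l, hl, hl0⟩ := W.ne_bot_iff.mp hne
  obtain ⟨t, ht⟩ := Function.ne_iff.mp hl0
  have ht0 : t ≠ 0 := by rintro rfl; exact ht (hW hl).1
  have h1 : nu ε t ∈ W := (W.smul_mem_iff ht).1 (nu_mem hε2 hW hT hl t ht0)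
  have h2 : ∀ b, b ≠ 0 → nu ε b ∈ W := fun b hb =>
    (W.smul_mem_iff (nu_ne hε t b hb)).1 (nu_mem hε2 hW hT h1 b hb)
  refine le_antisymm hW fun k hk => ?_
  have h3 : ∑ t, k t • nu ε t ∈ W := by
    refine W.sum_mem fun b _ => ?_
    by_cases hb : b = 0
    · rw [hb, hk.1, zero_smul]; exact W.zero_mem
    · exact W.smul_mem _ (h2 b hb)
  have h4 : ∑ t, k t • nu ε t = (2 * ((2 ^ q) ^ 2 + ε * 2 ^ q)) • k := by
    ext b
    simpa using nu_sum hε2 hk b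
  rw [h4] at h3
  exact (W.smul_mem_iff (mul_ne_zero two_ne_zero (den_ne hε2 hq))).1 h3

lemma card_sum : ∑ _a : Lab q, (1:ℂ) = (2 ^ q) ^ 2 := by
  have := ss_sum (0 : Lab q)
  simpa only [ss_zero, if_true] using this

lemma nu_EE {ε : ℂ} (hε : ε ^ 2 = 1) {t : Lab q} (ht : t ≠ 0) : nu ε t ∈ EE q ε := by
  refine ⟨by simp [nu], fun b => ?_⟩
  have h : ∀ c, ss b c * nu ε t c = ((2 ^ q) ^ 2 + ε * 2 ^ q) * (if c = t then ss b c else 0)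
      + (ε * 2 ^ q + 1) * ss (mm b t) c - ss b c - (if c = 0 then ε * 2 ^ q else 0) := by
    intro c
    by_cases hc : c = 0
    · subst hc
      simp [nu, Ne.symm ht, ss_zero']
    · simp only [nu, if_neg hc, ss_mm]
      rw [ss_symm t c]
      split_ifs <;> ring
  simp only [h, Finset.sum_add_distrib, Finset.sum_sub_distrib, ← Finset.mul_sum,
    Finset.sum_ite_eq', Finset.mem_univ, if_true, ss_sum, mm_eq_zero]
  by_cases hb : b = 0
  · subst hb
    simp [nu, ss_zero, Ne.symm ht]
  · simp only [nu, if_neg hb]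
    by_cases hbt : b = t
    · subst hbt
      simp only [if_true, ss_self]
      linear_combination (-2 * (2 ^ q) ^ 2) * hε
    · simp only [if_neg hbt]
      linear_combination (-ss b t * (2 ^ q) ^ 2) * hε

/-- projection matrix -/
def KK (q : ℕ) (ε : ℂ) : Matrix (Lab q) (Lab q) ℂ :=
  Matrix.of fun b t => if t = 0 then 0 else nu ε t b / (2 * ((2 ^ q) ^ 2 + ε * 2 ^ q))

lemma KK_apply (ε : ℂ) (l : Lab q → ℂ) :
    Matrix.toLin' (KK q ε) l =
      ∑ t, ((if t = 0 then 0 else l t) / (2 * ((2 ^ q) ^ 2 + ε * 2 ^ q))) • nu ε t := by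
  ext b
  simp only [Matrix.toLin'_apply, Matrix.mulVec, dotProduct, KK, Matrix.of_apply,
    Finset.sum_apply, Pi.smul_apply, smul_eq_mul]
  refine Finset.sum_congr rfl fun t _ => ?_
  split_ifs <;> ring

lemma KK_mem {ε : ℂ} (hε : ε ^ 2 = 1) (l : Lab q → ℂ) : Matrix.toLin' (KK q ε) l ∈ EE q ε := by
  rw [KK_apply]
  refine (EE q ε).sum_mem fun t _ => ?_
  by_cases ht : t = 0
  · simp [ht]
  · exact (EE q ε).smul_mem _ (nu_EE hε ht)

lemma KK_proj {ε : ℂ} (hε : ε ^ 2 = 1) (hq : 1 ≤ q) :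
    LinearMap.IsProj (EE q ε) (Matrix.toLin' (KK q ε)) := by
  refine ⟨KK_mem hε, fun l hl => ?_⟩
  rw [KK_apply]
  ext b
  have h := nu_sum hε hl b
  have h2 := den_ne hε hq
  simp only [Finset.sum_apply, Pi.smul_apply, smul_eq_mul]
  have : ∀ t, (if t = 0 then 0 else l t) / (2 * ((2 ^ q) ^ 2 + ε * 2 ^ q)) * nu ε t b
      = l t * nu ε t b / (2 * ((2 ^ q) ^ 2 + ε * 2 ^ q)) := by
    intro t
    split_ifs with ht
    · rw [ht, hl.1]; ring
    · ring
  simp only [this, ← Finset.sum_div, h]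
  exact mul_div_cancel_left₀ _ (mul_ne_zero two_ne_zero h2)

lemma EE_finrank {ε : ℂ} (hε : ε ^ 2 = 1) (hq : 1 ≤ q) :
    (Module.finrank ℂ (EE q ε) : ℂ) =
      ((2 ^ q) ^ 2 - 1) * ((2 ^ q) ^ 2 + 2 * ε * 2 ^ q) / (2 * ((2 ^ q) ^ 2 + ε * 2 ^ q)) := by
  rw [← (KK_proj hε hq).trace, Matrix.trace_toLin'_eq]
  simp only [Matrix.trace, Matrix.diag, KK, Matrix.of_apply]
  have : ∀ t : Lab q, (if t = 0 then 0 else nu ε t t / (2 * ((2 ^ q) ^ 2 + ε * 2 ^ q)))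
      = (1 - if t = 0 then 1 else 0) *
        (((2 ^ q) ^ 2 + 2 * ε * 2 ^ q) / (2 * ((2 ^ q) ^ 2 + ε * 2 ^ q))) := by
    intro t
    split_ifs with ht
    · simp
    · simp only [nu, if_neg ht, ss_self, if_true]; ring
  simp only [this, ← Finset.sum_mul, Finset.sum_sub_distrib, card_sum, Finset.sum_ite_eq',
    Finset.mem_univ, if_true]
  ring

lemma EE_finrank_pos (hq : 1 ≤ q) :
    Module.finrank ℂ (EE q 1) = 2 ^ q * (2 ^ q + 1) / 2 - 1 := by
  have h := EE_finrank (q := q) (ε := 1) (by norm_num) hq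
  have hden := den_ne (q := q) (ε := 1) (by norm_num) hq
  have h1 : (2 * Module.finrank ℂ (EE q 1) + 2 : ℂ) = 2 ^ q * (2 ^ q + 1) := by
    rw [h]
    rw [show ((2:ℂ) ^ q) ^ 2 + 1 * 2 ^ q = 2 ^ q * (2 ^ q + 1) by ring] at hden ⊢
    have := left_ne_zero_of_mul hden
    have := right_ne_zero_of_mul hden
    field_simp; ring
  have h2 : 2 * Module.finrank ℂ (EE q 1) + 2 = 2 ^ q * (2 ^ q + 1) := by exact_mod_cast h1
  omega

lemma EE_finrank_neg (hq : 1 ≤ q) :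
    Module.finrank ℂ (EE q (-1)) = 2 ^ q * (2 ^ q - 1) / 2 - 1 := by
  have h := EE_finrank (q := q) (ε := -1) (by norm_num) hq
  have hden := den_ne (q := q) (ε := -1) (by norm_num) hq
  have h1 : (2 * Module.finrank ℂ (EE q (-1)) + 2 : ℂ) = 2 ^ q * (2 ^ q - 1) := by
    rw [h]
    rw [show ((2:ℂ) ^ q) ^ 2 + -1 * 2 ^ q = 2 ^ q * (2 ^ q - 1) by ring] at hden ⊢
    have := left_ne_zero_of_mul hden
    have := right_ne_zero_of_mul hden
    field_simp; ring
  have h2 : 2 * Module.finrank ℂ (EE q (-1)) + 2 = 2 ^ q * (2 ^ q - 1) := by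
    have : 1 ≤ 2 ^ q := Nat.one_le_two_pow
    zify [this]; exact_mod_cast h1
  omega

/-- constant function off zero -/
def one0 (q : ℕ) : Lab q → ℂ := fun b => if b = 0 then 0 else 1

lemma decomp (hq : 1 ≤ q) (l : Lab q → ℂ) (hl : l 0 = 0) :
    l = ((∑ t, l t) / ((2 ^ q) ^ 2 - 1)) • one0 q + Matrix.toLin' (KK q 1) l
      + Matrix.toLin' (KK q (-1)) l := by
  have h1 := den_ne (q := q) (ε := 1) (by norm_num) hq
  have h2 := den_ne (q := q) (ε := -1) (by norm_num) hq
  ext b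
  simp only [KK_apply, Pi.add_apply, Finset.sum_apply, Pi.smul_apply, smul_eq_mul, one0]
  by_cases hb : b = 0
  · simp [hb, hl, nu]
  simp only [if_neg hb, mul_one]
  rw [Finset.sum_div, ← Finset.sum_add_distrib, ← Finset.sum_add_distrib]
  rw [show ((2:ℂ) ^ q) ^ 2 + -1 * 2 ^ q = 2 ^ q * (2 ^ q - 1) by ring] at *
  rw [show ((2:ℂ) ^ q) ^ 2 + 1 * 2 ^ q = 2 ^ q * (2 ^ q + 1) by ring] at *
  rw [show ((2:ℂ) ^ q) ^ 2 - 1 = (2 ^ q - 1) * (2 ^ q + 1) by ring] at *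
  have h3 := left_ne_zero_of_mul h1
  have h4 := right_ne_zero_of_mul h1
  have h5 := right_ne_zero_of_mul h2
  have : ∀ t, l t / ((2 ^ q - 1) * (2 ^ q + 1)) +
      (if t = 0 then 0 else l t) / (2 * (2 ^ q * (2 ^ q + 1))) * nu 1 t b +
      (if t = 0 then 0 else l t) / (2 * (2 ^ q * (2 ^ q - 1))) * nu (-1) t b
      = if b = t then l t else 0 := by
    intro t
    by_cases ht : t = 0
    · subst ht; simp [hl]
    simp only [nu, if_neg ht, if_neg hb]
    split_ifs <;> field_simp <;> ring
  simp only [this]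
  simp

lemma orth1 {ε : ℂ} {l : Lab q → ℂ} (hl : l ∈ EE q ε) (c : ℂ) :
    ∑ a, star ((c • one0 q) a) * l a = 0 := by
  have : ∀ a, star ((c • one0 q) a) * l a = star c * l a := by
    intro a
    by_cases h : a = 0
    · simp [h, hl.1]
    · simp [one0, h]
  simp only [this, ← Finset.mul_sum, EE_sum hl, mul_zero]

lemma ss_star (a b : Lab q) : star (ss a b) = ss a b := by
  rcases ss_pm a b with h | h <;> simp [h]

lemma orth2 {l k : Lab q → ℂ} (hl : l ∈ EE q 1) (hk : k ∈ EE q (-1)) :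
    ∑ a, star (l a) * k a = 0 := by
  have h1 : ∑ a, ∑ c, star (l a) * ss a c * k c = -(2 ^ q) * ∑ a, star (l a) * k a := by
    rw [Finset.mul_sum]
    refine Finset.sum_congr rfl fun a _ => ?_
    simp only [mul_assoc, ← Finset.mul_sum, hk.2]
    ring
  have h2 : ∑ a, ∑ c, star (l a) * ss a c * k c = (2 ^ q) * ∑ a, star (l a) * k a := by
    rw [Finset.sum_comm, Finset.mul_sum]
    refine Finset.sum_congr rfl fun c _ => ?_
    rw [← Finset.sum_mul]
    have : ∑ a, star (l a) * ss a c = star (∑ a, ss c a * l a) := by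
      rw [star_sum]
      refine Finset.sum_congr rfl fun a _ => ?_
      rw [star_mul', ss_star, ss_symm c a, mul_comm]
    rw [this, hl.2]
    simp
    ring
  have h3 := two_pow_ne (q := q)
  apply mul_left_cancel₀ (mul_ne_zero two_ne_zero h3)
  linear_combination h1 - h2

end

section
variable {q : ℕ}

lemma exists_lift (l : Lab q → ℂ) : ∃ lam : Mat q → ℂ, ∀ a, lam (sg a) = l a :=
  ⟨Function.extend sg l 0, fun a => sg_inj.extend_apply l 0 a⟩

lemma sum_sigma {M : Type*} [AddCommMonoid M] (f : Mat q → M) :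
    ∑ᶠ σ ∈ sigmaSet q, f σ = ∑ a : Lab q, if a = 0 then 0 else f (sg a) := by
  classical
  rw [sigmaSet_eq, finsum_image]
  refine Finset.sum_congr rfl fun a _ => ?_
  by_cases h : a = 0 <;> simp [h]

lemma sum_N (f : Mat q → ℂ) (t : Lab q) :
    ∑ᶠ σ ∈ NSet (sg t), f σ = ∑ a : Lab q, (1 - ss t a) / 2 * (if a = 0 then 0 else f (sg a)) := by
  classical
  rw [NSet_eq, finsum_image]
  refine Finset.sum_congr rfl fun a _ => ?_
  rw [ss_symm t a]
  by_cases h : a = 0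
  · simp [h]
  · rcases ss_pm a t with h' | h'
    · rw [if_neg, h']
      · simp
      · rintro ⟨_, h2⟩; rw [h'] at h2; norm_num at h2
    · rw [if_pos ⟨h, h'⟩, h', if_neg h]; ring

lemma mem_bridge (ε : ℂ) (v : BMat q) :
    (∃ lam : Mat q → ℂ,
      v = ∑ᶠ σ ∈ sigmaSet q, lam σ • (σ ⊗ₖ σ) ∧
      (∑ᶠ σ ∈ sigmaSet q, lam σ) = 0 ∧
      ∀ τ ∈ sigmaSet q, (∑ᶠ σ ∈ NSet τ, lam σ) = -(ε * (2 ^ q : ℂ) / 2) * lam τ) ↔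
    v ∈ (EE q ε).map Phi := by
  constructor
  · rintro ⟨lam, rfl, h1, h2⟩
    let l : Lab q → ℂ := fun a => if a = 0 then 0 else lam (sg a)
    have hs : ∑ a, l a = 0 := by rw [← h1, sum_sigma]
    refine ⟨l, ⟨by simp [l], fun b => ?_⟩, ?_⟩
    · by_cases hb : b = 0
      · subst hb
        simp only [ss_zero, one_mul, hs]; simp [l]
      · have h3 := h2 (sg b) (by rw [sigmaSet_eq]; exact ⟨b, hb, rfl⟩)
        rw [sum_N] at h3
        have h4 : ∑ a, (1 - ss b a) / 2 * l a = (∑ a, l a - ∑ a, ss b a * l a) / 2 := by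
          rw [← Finset.sum_sub_distrib, Finset.sum_div]
          exact Finset.sum_congr rfl fun a _ => by ring
        have h5 : lam (sg b) = l b := by simp [l, hb]
        rw [h5] at h3
        have h6 := h4.symm.trans h3
        rw [hs] at h6
        linear_combination (-2) * h6
    · rw [sum_sigma, Phi_apply]
      refine Finset.sum_congr rfl fun a _ => ?_
      by_cases h : a = 0 <;> simp [l, h]
  · rintro ⟨l, hl, rfl⟩
    obtain ⟨lam, hlam⟩ := exists_lift l
    have hl' : ∀ a : Lab q, (if a = 0 then 0 else lam (sg a)) = l a := by
      intro a; by_cases h : a = 0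
      · rw [h, hl.1]; simp
      · simp [h, hlam]
    refine ⟨lam, ?_, ?_, ?_⟩
    · rw [sum_sigma, Phi_apply]
      refine Finset.sum_congr rfl fun a _ => ?_
      by_cases h : a = 0
      · simp [h, hl.1]
      · simp [h, hlam]
    · rw [sum_sigma]; simp only [hl', EE_sum hl]
    · intro τ hτ
      rw [sigmaSet_eq] at hτ
      obtain ⟨t, ht, rfl⟩ := hτ
      rw [sum_N, hlam]
      simp only [hl']
      have h4 : ∑ a, (1 - ss t a) / 2 * l a = (∑ a, l a - ∑ a, ss t a * l a) / 2 := by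
        rw [← Finset.sum_sub_distrib, Finset.sum_div]
        exact Finset.sum_congr rfl fun a _ => by ring
      rw [h4, EE_sum hl, hl.2]; ring

lemma V1_eq : V1diag q = (EE q 1).map Phi := by
  unfold V1diag
  rw [← Submodule.span_eq ((EE q 1).map Phi)]
  congr 1
  ext v
  rw [SetLike.mem_coe, ← mem_bridge]
  simp only [one_mul]; rfl

lemma V2_eq : V2diag q = (EE q (-1)).map Phi := by
  unfold V2diag
  rw [← Submodule.span_eq ((EE q (-1)).map Phi)]
  congr 1
  ext v
  rw [SetLike.mem_coe, ← mem_bridge]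
  simp only [neg_mul, one_mul, neg_div, neg_neg]; rfl

lemma V0_eq : V0diag q = Submodule.span ℂ {Phi (one0 q)} := by
  unfold V0diag
  congr 2
  rw [sum_sigma, Phi_apply]
  refine Finset.sum_congr rfl fun a _ => ?_
  by_cases h : a = 0 <;> simp [one0, h]

lemma mem_Vd (v : BMat q) : v ∈ Vdiag q ↔ ∃ l : Lab q → ℂ, l 0 = 0 ∧ Phi l = v := by
  constructor
  · intro h
    refine Submodule.span_induction ?_ ?_ ?_ ?_ h
    · rintro x ⟨τ, hτ, rfl⟩
      rw [sigmaSet_eq] at hτ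
      obtain ⟨t, ht, rfl⟩ := hτ
      exact ⟨Pi.single t 1, by simp [Ne.symm ht], Phi_single t⟩
    · exact ⟨0, rfl, map_zero _⟩
    · rintro x y _ _ ⟨l, h1, rfl⟩ ⟨k, h2, rfl⟩
      exact ⟨l + k, by simp [h1, h2], map_add _ _ _⟩
    · rintro c x _ ⟨l, h1, rfl⟩
      exact ⟨c • l, by simp [h1], map_smul _ _ _⟩
  · rintro ⟨l, h0, rfl⟩
    rw [Phi_apply]
    refine Submodule.sum_mem _ fun a _ => ?_
    by_cases ha : a = 0
    · rw [ha, h0, zero_smul]; exact Submodule.zero_mem _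
    · refine Submodule.smul_mem _ _ (Submodule.subset_span ⟨sg a, ?_, rfl⟩)
      rw [sigmaSet_eq]; exact ⟨a, ha, rfl⟩

lemma twoCopy_kron (U A B : Mat q) :
    twoCopy U (A ⊗ₖ B) = (U * A * Uᴴ) ⊗ₖ (U * B * Uᴴ) := by
  change (U ⊗ₖ U) * (A ⊗ₖ B) * (U ⊗ₖ U)ᴴ = _
  rw [Matrix.conjTranspose_kronecker, ← Matrix.mul_kronecker_mul, ← Matrix.mul_kronecker_mul]

lemma cliff_perm {U : Mat q} (hU : U ∈ Cliff q) : ∃ π : Equiv.Perm (Lab q),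
    π 0 = 0 ∧ (∀ a b, ss (π a) (π b) = ss a b) ∧
    ∀ l : Lab q → ℂ, twoCopy U (Phi l) = Phi (l ∘ π.symm) := by
  obtain ⟨hu, hP⟩ := hU
  have h1 : Uᴴ * U = 1 := (Matrix.mem_unitaryGroup_iff' (A := U)).1 hu
  have h2 : U * Uᴴ = 1 := (Matrix.mem_unitaryGroup_iff (A := U)).1 hu
  have hf : ∀ a : Lab q, ∃ b : Lab q, ∃ e : ℂ, e * e = 1 ∧ U * sg a * Uᴴ = e • sg b := by
    intro a
    obtain ⟨τ, ⟨b, rfl⟩, h | h⟩ := hP (sg a) ⟨a, rfl⟩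
    · exact ⟨b, 1, by norm_num, by rw [h, one_smul]; rfl⟩
    · exact ⟨b, -1, by norm_num, by rw [h, neg_one_smul]; rfl⟩
  choose f e he hfe using hf
  have hk : ∀ a, twoCopy U (sg a ⊗ₖ sg a) = sg (f a) ⊗ₖ sg (f a) := by
    intro a
    rw [twoCopy_kron, hfe, Matrix.smul_kronecker, Matrix.kronecker_smul, smul_smul, he, one_smul]
  have hcancel : ∀ A : Mat q, Uᴴ * (U * A * Uᴴ) * U = A := by
    intro A
    calc Uᴴ * (U * A * Uᴴ) * U = (Uᴴ * U) * A * (Uᴴ * U) := by simp only [Matrix.mul_assoc]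
      _ = A := by rw [h1]; simp
  have hinj : Function.Injective f := by
    intro a b hab
    apply kron_inj
    have h3 : sg a = (e a * e b) • sg b := by
      rw [← hcancel (sg a), hfe, hab]
      have : sg (f b) = e b • (U * sg b * Uᴴ) := by rw [hfe, smul_smul, he, one_smul]
      rw [this, smul_smul, Matrix.mul_smul, Matrix.smul_mul, hcancel]
    rw [h3, Matrix.smul_kronecker, Matrix.kronecker_smul, smul_smul]
    rw [show e a * e b * (e a * e b) = (e a * e a) * (e b * e b) by ring, he, he]; simp
  let π : Equiv.Perm (Lab q) := Equiv.ofBijective f (Finite.injective_iff_bijective.1 hinj)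
  have hπ : ∀ a, π a = f a := fun a => rfl
  refine ⟨π, ?_, ?_, ?_⟩
  · rw [hπ]
    apply kron_inj
    rw [← hk, twoCopy_kron, sg_zero, sigma0]
    simp [h2]
  · intro a b
    rw [hπ, hπ]
    have hm : ∀ a b : Lab q, U * (sg a * sg b) * Uᴴ = (e a * e b) • (sg (f a) * sg (f b)) := by
      intro a b
      have : U * (sg a * sg b) * Uᴴ = (U * sg a * Uᴴ) * (U * sg b * Uᴴ) := by
        calc U * (sg a * sg b) * Uᴴ = U * sg a * 1 * (sg b * Uᴴ) := by
              simp only [Matrix.mul_assoc, Matrix.one_mul]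
          _ = _ := by rw [← h1]; simp only [Matrix.mul_assoc]
      rw [this, hfe, hfe, Matrix.smul_mul, Matrix.mul_smul, smul_smul]
    have h3 := hm a b
    rw [sg_comm a b, Matrix.mul_smul, Matrix.smul_mul, hm, sg_comm (f a) (f b), smul_smul,
      smul_smul] at h3
    have h4 := smul_left_injective ℂ (sg_mul_ne (f b) (f a)) h3
    have hne : e a * e b ≠ 0 := by
      intro h0
      have : (e a * e a) * (e b * e b) = 0 := by linear_combination (e a * e b) * h0
      rw [he, he] at this; norm_num at this
    apply mul_left_cancel₀ hne
    linear_combination -h4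
  · intro l
    rw [Phi_apply, map_sum, Phi_apply,
      ← Equiv.sum_comp π (fun a => (l ∘ π.symm) a • (sg a ⊗ₖ sg a))]
    refine Finset.sum_congr rfl fun a _ => ?_
    rw [map_smul, hk, Function.comp_apply, Equiv.symm_apply_apply, hπ]

lemma EE_inv (ε : ℂ) : IsInvariant q ((EE q ε).map Phi) := by
  rintro U hU _ ⟨l, hl, rfl⟩
  obtain ⟨π, h0, hs, hπ⟩ := cliff_perm hU
  rw [hπ]
  refine ⟨_, ⟨?_, fun b => ?_⟩, rfl⟩
  · have : π.symm 0 = 0 := by rw [Equiv.symm_apply_eq, h0]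
    simp [this, hl.1]
  · rw [← Equiv.sum_comp π]
    have h := hl.2 (π.symm b)
    simp only [Function.comp_apply, Equiv.symm_apply_apply]
    rw [← h]
    refine Finset.sum_congr rfl fun c _ => ?_
    rw [← hs (π.symm b) c, Equiv.apply_symm_apply]

lemma V0_inv : IsInvariant q (V0diag q) := by
  intro U hU v hv
  rw [V0_eq, Submodule.mem_span_singleton] at hv ⊢
  obtain ⟨c, rfl⟩ := hv
  obtain ⟨π, h0, hs, hπ⟩ := cliff_perm hU
  refine ⟨c, ?_⟩
  rw [map_smul, hπ]
  congr 2
  ext b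
  have : π.symm b = 0 ↔ b = 0 := by rw [Equiv.symm_apply_eq, h0]
  simp [one0, this]

/-- transvection unitary -/
def UT (a : Lab q) : Mat q := ((Real.sqrt 2 : ℝ) : ℂ)⁻¹ • (1 + Complex.I • PauliOp a)

lemma sqrt2_sq : ((Real.sqrt 2 : ℝ) : ℂ)⁻¹ * ((Real.sqrt 2 : ℝ) : ℂ)⁻¹ = 1 / 2 := by
  rw [← mul_inv, ← Complex.ofReal_mul, Real.mul_self_sqrt (by norm_num)]; simp

lemma UT_star (a : Lab q) :
    (UT a)ᴴ = ((Real.sqrt 2 : ℝ) : ℂ)⁻¹ • (1 - Complex.I • PauliOp a) := by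
  simp [UT, Matrix.conjTranspose_smul, PauliOp_herm, sub_eq_add_neg]

lemma PauliOp_sq (a : Lab q) : PauliOp a * PauliOp a = 1 := by
  rw [PauliOp_mul, ph_self, mm_self, PauliOp_zero, one_smul]

lemma PauliOp_comm (a b : Lab q) : PauliOp a * PauliOp b = ss a b • (PauliOp b * PauliOp a) := by
  simp only [PauliOp_mul, smul_smul]
  rw [ph_symm a b, mm_comm b a]

lemma UT_conj (a : Lab q) (M : Mat q) : UT a * M * (UT a)ᴴ = (1 / 2 : ℂ) •
    (M + PauliOp a * M * PauliOp a + Complex.I • (PauliOp a * M - M * PauliOp a)) := by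
  rw [UT_star, UT, Matrix.smul_mul, Matrix.smul_mul, Matrix.mul_smul, smul_smul, sqrt2_sq]
  congr 1
  simp only [Matrix.add_mul, Matrix.mul_sub, Matrix.one_mul, Matrix.mul_one, Matrix.smul_mul,
    Matrix.mul_smul, smul_smul, smul_sub, smul_add, Complex.I_mul_I]
  module

lemma UT_pauli (a b : Lab q) : ∃ e : ℂ, (e = 1 ∨ e = -1) ∧
    UT a * PauliOp b * (UT a)ᴴ = e • PauliOp (TT a b) := by
  have hc := PauliOp_comm b a
  have hPP : PauliOp a * PauliOp b * PauliOp a = ss b a • PauliOp b := by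
    rw [Matrix.mul_assoc, hc, Matrix.mul_smul, ← Matrix.mul_assoc, PauliOp_sq, Matrix.one_mul]
  rw [UT_conj, hPP, hc]
  rcases ss_pm a b with h | h
  · refine ⟨1, Or.inl rfl, ?_⟩
    rw [TT_pos h, ss_symm b a, h]
    module
  · refine ⟨Complex.I * ph a b, ?_, ?_⟩
    · have : (Complex.I * ph a b) ^ 2 = 1 := by
        rw [mul_pow, ph_sq, h, Complex.I_sq]; norm_num
      simpa using this
    · rw [TT_neg h, ss_symm b a, h, PauliOp_mul]
      module

lemma UT_cliff (a : Lab q) : UT a ∈ Cliff q := by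
  constructor
  · rw [Matrix.mem_unitaryGroup_iff]
    have := UT_conj a 1
    rw [Matrix.mul_one, Matrix.mul_one, Matrix.one_mul, PauliOp_sq] at this
    change UT a * (UT a)ᴴ = 1
    rw [this]; module
  · rintro _ ⟨b, rfl⟩
    obtain ⟨e, he, h⟩ := UT_pauli a b
    refine ⟨_, ⟨TT a b, rfl⟩, ?_⟩
    rw [Matrix.mul_smul, Matrix.smul_mul, h]
    rcases he with rfl | rfl
    · left; simp
    · right; simp

lemma TT_invol (a : Lab q) : Function.Involutive (TT a) := by
  intro b
  rcases ss_pm a b with h | h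
  · rw [TT_pos h, TT_pos h]
  · have : ss a (mm a b) = -1 := by rw [ss_mm', ss_self, h, one_mul]
    rw [TT_neg h, TT_neg this, mm_comm a, mm_comm a, mm_cancel]

lemma UT_Phi (a : Lab q) (l : Lab q → ℂ) :
    twoCopy (UT a) (Phi l) = Phi (fun b => l (TT a b)) := by
  rw [Phi_apply, map_sum, Phi_apply, ← Equiv.sum_comp (TT_invol a).toPerm]
  refine Finset.sum_congr rfl fun b _ => ?_
  obtain ⟨e, he, h⟩ := UT_pauli a (TT a b)
  rw [TT_invol a b] at h
  simp only [Function.Involutive.coe_toPerm]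
  have h2 : UT a * sg (TT a b) * (UT a)ᴴ = e • sg b := by
    rw [sg, Matrix.mul_smul, Matrix.smul_mul, h, smul_comm]; rfl
  have hee : e * e = 1 := by rcases he with rfl | rfl <;> norm_num
  rw [map_smul, twoCopy_kron, h2, Matrix.smul_kronecker, Matrix.kronecker_smul, smul_smul e,
    hee, one_smul]

lemma EE_irr {ε : ℂ} (hε : ε = 1 ∨ (ε = -1 ∧ 2 ≤ q)) (hq : 1 ≤ q)
    (hne : EE q ε ≠ ⊥) : CarriesIrred q ((EE q ε).map Phi) := by
  refine ⟨?_, EE_inv ε, fun W' hW' hinv => ?_⟩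
  · intro h
    rw [← Submodule.map_bot Phi] at h
    exact hne (Submodule.map_injective_of_injective Phi_inj h)
  · have hWmap : (W'.comap Phi).map Phi = W' := by
      rw [Submodule.map_comap_eq, inf_eq_right]
      exact hW'.trans LinearMap.map_le_range
    have hle : W'.comap Phi ≤ EE q ε := by
      intro l hl
      obtain ⟨k, hk, hkl⟩ := hW' hl
      rwa [← Phi_inj hkl]
    by_cases hb : W'.comap Phi = ⊥
    · left; rw [← hWmap, hb, Submodule.map_bot]
    · right
      rw [← hWmap]
      congr 1
      refine irr_core hε hq hle (fun l hl a => ?_) hb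
      rw [Submodule.mem_comap, ← UT_Phi]
      exact hinv _ (UT_cliff a) _ hl

lemma V0_irr (hq : 1 ≤ q) : CarriesIrred q (V0diag q) := by
  have h0 : Phi (one0 q) ≠ 0 := by
    intro h
    rw [← map_zero Phi] at h
    have h2 := congrFun (Phi_inj h) (fun _ => 1)
    have h3 : (fun _ => 1 : Lab q) ≠ 0 := by
      intro h; have := congrFun h ⟨0, hq⟩; simp at this
    simp [one0, h3] at h2
  refine ⟨?_, V0_inv, fun W' hW' _ => ?_⟩
  · rw [V0_eq, Ne, Submodule.span_singleton_eq_bot]; exact h0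
  · by_cases hb : W' = ⊥
    · exact Or.inl hb
    · right
      refine le_antisymm hW' ?_
      obtain ⟨v, hv, hv0⟩ := W'.ne_bot_iff.mp hb
      have h1 := hW' hv
      rw [V0_eq, Submodule.mem_span_singleton] at h1
      obtain ⟨c, rfl⟩ := h1
      have hc : c ≠ 0 := by rintro rfl; simp at hv0
      rw [V0_eq, Submodule.span_singleton_le_iff_mem]
      exact (W'.smul_mem_iff hc).1 hv

lemma V_sup (hq : 1 ≤ q) : V0diag q ⊔ V1diag q ⊔ V2diag q = Vdiag q := by
  apply le_antisymm
  · refine sup_le (sup_le ?_ ?_) ?_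
    · rw [V0_eq, Submodule.span_singleton_le_iff_mem, mem_Vd]
      exact ⟨_, by simp [one0], rfl⟩
    · rw [V1_eq]; rintro _ ⟨l, hl, rfl⟩; exact (mem_Vd _).2 ⟨l, hl.1, rfl⟩
    · rw [V2_eq]; rintro _ ⟨l, hl, rfl⟩; exact (mem_Vd _).2 ⟨l, hl.1, rfl⟩
  · intro v hv
    obtain ⟨l, h0, rfl⟩ := (mem_Vd _).1 hv
    rw [decomp hq l h0, map_add, map_add, map_smul]
    refine Submodule.add_mem_sup (Submodule.add_mem_sup ?_ ?_) ?_
    · rw [V0_eq]; exact Submodule.smul_mem _ _ (Submodule.mem_span_singleton_self _)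
    · rw [V1_eq]; exact ⟨_, KK_mem (by norm_num) l, rfl⟩
    · rw [V2_eq]; exact ⟨_, KK_mem (by norm_num) l, rfl⟩

lemma V0_orth (ε : ℂ) : ∀ x ∈ V0diag q, ∀ y ∈ (EE q ε).map Phi, hs x y = 0 := by
  rintro x hx _ ⟨k, hk, rfl⟩
  rw [V0_eq, Submodule.mem_span_singleton] at hx
  obtain ⟨c, rfl⟩ := hx
  rw [← map_smul, hs_Phi]
  exact orth1 hk c

lemma V12_orth : ∀ x ∈ V1diag q, ∀ y ∈ V2diag q, hs x y = 0 := by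
  rw [V1_eq, V2_eq]
  rintro _ ⟨l, hl, rfl⟩ _ ⟨k, hk, rfl⟩
  rw [hs_Phi]
  exact orth2 hl hk

lemma finrank_map (ε : ℂ) :
    Module.finrank ℂ ((EE q ε).map Phi) = Module.finrank ℂ (EE q ε) :=
  (Submodule.equivMapOfInjective Phi Phi_inj (EE q ε)).finrank_eq.symm

end

/-- diagonal sector: `V_d = V_0 ⊕ V_1 ⊕ V_2` orthogonally, with the
stated dimensions, each summand invariant and carrying an irreducible subrepresentation;
for `q = 1` one has `V_2 = 0`. -/
theorem statement3 (q : ℕ) (hq : 1 ≤ q) :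
    (2 ≤ q →
      V0diag q ⊔ V1diag q ⊔ V2diag q = Vdiag q ∧
      (∀ x ∈ V0diag q, ∀ y ∈ V1diag q, hs x y = 0) ∧
      (∀ x ∈ V0diag q, ∀ y ∈ V2diag q, hs x y = 0) ∧
      (∀ x ∈ V1diag q, ∀ y ∈ V2diag q, hs x y = 0) ∧
      Module.finrank ℂ ↥(V1diag q) = 2 ^ q * (2 ^ q + 1) / 2 - 1 ∧
      Module.finrank ℂ ↥(V2diag q) = 2 ^ q * (2 ^ q - 1) / 2 - 1 ∧
      CarriesIrred q (V0diag q) ∧ CarriesIrred q (V1diag q) ∧ CarriesIrred q (V2diag q)) ∧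
    (q = 1 →
      V2diag q = ⊥ ∧ V0diag q ⊔ V1diag q = Vdiag q ∧
      (∀ x ∈ V0diag q, ∀ y ∈ V1diag q, hs x y = 0) ∧
      Module.finrank ℂ ↥(V1diag q) = 2 ^ q * (2 ^ q + 1) / 2 - 1 ∧
      CarriesIrred q (V0diag q) ∧ CarriesIrred q (V1diag q)) := by
  have hpow : 2 ≤ 2 ^ q := by
    simpa using Nat.pow_le_pow_right (show 0 < 2 by norm_num) hq
  have hne1 : EE q 1 ≠ ⊥ := by
    intro h
    have h1 := EE_finrank_pos hq
    rw [h, finrank_bot] at h1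
    have : 2 * (2 + 1) ≤ 2 ^ q * (2 ^ q + 1) := by gcongr
    omega
  refine ⟨fun hq2 => ?_, fun hq1 => ?_⟩
  · have hpow2 : 4 ≤ 2 ^ q := by
      simpa using Nat.pow_le_pow_right (show 0 < 2 by norm_num) hq2
    have hne2 : EE q (-1) ≠ ⊥ := by
      intro h
      have h1 := EE_finrank_neg hq
      rw [h, finrank_bot] at h1
      have h3 : 3 ≤ 2 ^ q - 1 := by omega
      have : 4 * 3 ≤ 2 ^ q * (2 ^ q - 1) := Nat.mul_le_mul hpow2 h3
      omega
    refine ⟨V_sup hq, ?_, ?_, V12_orth, ?_, ?_, V0_irr hq, ?_, ?_⟩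
    · rw [V1_eq]; exact V0_orth 1
    · rw [V2_eq]; exact V0_orth (-1)
    · rw [V1_eq, finrank_map, EE_finrank_pos hq]
    · rw [V2_eq, finrank_map, EE_finrank_neg hq]
    · rw [V1_eq]; exact EE_irr (Or.inl rfl) hq hne1
    · rw [V2_eq]; exact EE_irr (Or.inr ⟨rfl, hq2⟩) hq hne2
  · have h2 : V2diag q = ⊥ := by
      rw [V2_eq]
      have h1 := EE_finrank_neg hq
      rw [hq1] at h1
      norm_num at h1
      rw [hq1, h1, Submodule.map_bot]
    refine ⟨h2, ?_, ?_, ?_, V0_irr hq, ?_⟩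
    · have := V_sup hq
      rwa [h2, sup_bot_eq] at this
    · rw [V1_eq]; exact V0_orth 1
    · rw [V1_eq, finrank_map, EE_finrank_pos hq]
    · rw [V1_eq]; exact EE_irr (Or.inl rfl) hq hne1

end CliffordPaper
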